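/- Let G be a simple graph on vertex set [n] with clique number ω. Then for every integer s with 1 ≤ s ≤ ω and every x = (x_1,...,x_n) ∈ ℝ^n with x ≥ 0, one has f_s(G,x) ≤ C(ω,s)·((x_1 + ··· + x_n)/ω)^s. -/

import Mathlib

open Finset

/-- `fClique G s x` is the clique polynomial `f_s(G,x) = Σ_{S an s-clique of G} Π_{i ∈ S} x_i`. -/
def fClique {n : ℕ} (G : SimpleGraph (Fin n)) [DecidableRel G.Adj] (s : ℕ)
    (x : Fin n → ℝ) : ℝ :=
  ∑ S ∈ G.cliqueFinset s, ∏ i ∈ S, x i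

/-!
Symmetrization in the style of Zykov and Motzkin–Straus. No clique contains two distinct
nonadjacent vertices `i` and `j`, so with `x i + x j` fixed the clique polynomial is affine in `x i`
and maximal when all the weight of one of the two sits on the other. Repeating this shrinks the
support of `x` to a clique, without changing the total weight. There the clique polynomial is the
elementary symmetric polynomial of at most `ω` weights, which Maclaurin's inequality bounds.
-/

section ElementarySymmetric

theorem esymm_cons_succ {R : Type*} [CommSemiring R] (a : R) (t : Multiset R) (s : ℕ) :
    (a ::ₘ t).esymm (s + 1) = t.esymm (s + 1) + a * t.esymm s := by
  simp [Multiset.esymm, Multiset.sum_map_mul_left]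

variable {𝕜 : Type*} [Field 𝕜] [LinearOrder 𝕜] [IsStrictOrderedRing 𝕜]

theorem choose_mul_pow_add_le_choose_mul_mean_pow {u a : 𝕜} (hu : 0 ≤ u) (ha : 0 ≤ a) (m s : ℕ) :
    m.choose (s + 1) * u ^ (s + 1) + a * (m.choose s * u ^ s)
      ≤ (m + 1).choose (s + 1) * ((m * u + a) / (m + 1 : ℕ)) ^ (s + 1) := by
  have absorb : ((m + 1 : ℕ) : 𝕜) * m.choose s = (m + 1).choose (s + 1) * (s + 1) := by
    exact_mod_cast Nat.add_one_mul_choose_eq m s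
  have pascal : ((m + 1).choose (s + 1) : 𝕜) = m.choose s + m.choose (s + 1) := by
    exact_mod_cast Nat.choose_succ_succ m s
  set d : 𝕜 := (a - u) / (m + 1 : ℕ) with hd
  have mul_d : ((m + 1 : ℕ) : 𝕜) * d = a - u := by rw [hd]; field_simp
  have mean : (m * u + a) / (m + 1 : ℕ) = u + d := by rw [hd]; push_cast; field_simp; ring
  have mean_nonneg : 0 ≤ u + d := by rw [← mean]; positivity
  have bernoulli : u ^ (s + 1) + (s + 1 : ℕ) * u ^ s * d ≤ (u + d) ^ (s + 1) :=
    pow_add_mul_le_add_pow hu (by linarith) (s + 1)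
  calc m.choose (s + 1) * u ^ (s + 1) + a * (m.choose s * u ^ s)
      = (m + 1).choose (s + 1) * u ^ (s + 1) + m.choose s * u ^ s * (a - u) := by
        rw [pascal]; ring
    _ = (m + 1).choose (s + 1) * u ^ (s + 1) + (m + 1 : ℕ) * m.choose s * (u ^ s * d) := by
        rw [← mul_d]; ring
    _ = (m + 1).choose (s + 1) * (u ^ (s + 1) + (s + 1 : ℕ) * u ^ s * d) := by
        rw [absorb]; push_cast; ring
    _ ≤ (m + 1).choose (s + 1) * (u + d) ^ (s + 1) := by gcongr
    _ = (m + 1).choose (s + 1) * ((m * u + a) / (m + 1 : ℕ)) ^ (s + 1) := by rw [mean]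

theorem esymm_le_choose_mul_mean_pow {t : Multiset 𝕜} (ht : ∀ a ∈ t, 0 ≤ a) {m : ℕ}
    (hm : t.card ≤ m) (s : ℕ) : t.esymm s ≤ m.choose s * (t.sum / m) ^ s := by
  induction t using Multiset.induction generalizing m s with
  | empty => cases s <;> simp [Multiset.esymm, Multiset.powersetCard_zero_right]
  | cons a t ih =>
    obtain ⟨ha, ht⟩ := Multiset.forall_mem_cons.1 ht
    rw [Multiset.card_cons] at hm
    obtain ⟨m, rfl⟩ := Nat.exists_eq_add_one.2 (show 0 < m by omega)
    have hm : t.card ≤ m := by omega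
    cases s with
    | zero => simp [Multiset.esymm]
    | succ s =>
      have mul_mean : (m : 𝕜) * (t.sum / m) = t.sum :=
        mul_div_cancel_of_imp' fun h ↦ by
          have ht0 : t = 0 := by simp_all
          rw [ht0, Multiset.sum_zero]
      have mean_nonneg : 0 ≤ t.sum / m := div_nonneg (Multiset.sum_nonneg ht) m.cast_nonneg
      calc (a ::ₘ t).esymm (s + 1)
          = t.esymm (s + 1) + a * t.esymm s := esymm_cons_succ a t s
        _ ≤ m.choose (s + 1) * (t.sum / m) ^ (s + 1) + a * (m.choose s * (t.sum / m) ^ s) := by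
            gcongr
            exacts [ih ht hm _, ih ht hm _]
        _ ≤ (m + 1).choose (s + 1) * ((m * (t.sum / m) + a) / (m + 1 : ℕ)) ^ (s + 1) :=
            choose_mul_pow_add_le_choose_mul_mean_pow mean_nonneg ha m s
        _ = (m + 1).choose (s + 1) * ((a ::ₘ t).sum / (m + 1 : ℕ)) ^ (s + 1) := by
            rw [mul_mean, Multiset.sum_cons, add_comm a]

end ElementarySymmetric

section TransferWeight

variable {V R : Type*} [DecidableEq V]

/-- The weighting obtained from `x` by moving the weight of the vertex `j` onto the vertex `i`, the
symmetrization step of the proof. Intended for `i ≠ j`: at `i = j` the weight is erased. -/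
def transferWeight [Add R] [Zero R] (x : V → R) (i j : V) : V → R :=
  Function.update (Function.update x i (x i + x j)) j 0

theorem transferWeight_of_eq_zero [AddZeroClass R] {x : V → R} {j : V} (hj : x j = 0) (i : V) :
    transferWeight x i j = x := by
  rw [transferWeight, hj, add_zero, Function.update_eq_self, ← hj, Function.update_eq_self]

theorem transferWeight_nonneg [AddZeroClass R] [Preorder R] [AddLeftMono R]
    {x : V → R} (hx : 0 ≤ x) (i j : V) : 0 ≤ transferWeight x i j :=
  have add_to_i : 0 ≤ Function.update x i (x i + x j) :=
    le_update_iff.2 ⟨add_nonneg (hx i) (hx j), fun k _ ↦ hx k⟩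
  le_update_iff.2 ⟨le_rfl, fun k _ ↦ add_to_i k⟩

theorem transferWeight_eq_zero_of_notMem_erase [Add R] [Zero R] {x : V → R} {K : Finset V}
    {i j : V} (hx : ∀ k ∉ K, x k = 0) (hi : i ∈ K) :
    ∀ k ∉ K.erase j, transferWeight x i j k = 0 := by
  intro k hk
  rcases eq_or_ne k j with rfl | hkj
  · simp [transferWeight]
  · have hkK : k ∉ K := fun h ↦ hk (mem_erase.2 ⟨hkj, h⟩)
    have hki : k ≠ i := fun h ↦ hkK (h ▸ hi)
    simp [transferWeight, hkj, hki, hx k hkK]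

theorem sum_transferWeight [Fintype V] [AddCommMonoid R] (x : V → R) {i j : V} (hij : i ≠ j) :
    ∑ k, transferWeight x i j k = ∑ k, x k := by
  have hi : i ∈ univ \ {j} := by simp [hij]
  rw [transferWeight, sum_update_of_mem (mem_univ j), sum_update_of_mem hi, zero_add,
    sum_eq_add_sum_sdiff_singleton_of_mem (mem_univ j) x,
    sum_eq_add_sum_sdiff_singleton_of_mem hi x, add_assoc, add_left_comm]

theorem prod_transferWeight_of_notMem [CommSemiring R] (x : V → R) {i j : V} {S : Finset V}
    (hi : i ∉ S) (hj : j ∉ S) : ∏ k ∈ S, transferWeight x i j k = ∏ k ∈ S, x k := by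
  rw [transferWeight, prod_update_of_notMem hj, prod_update_of_notMem hi]

theorem prod_transferWeight_of_source_mem [CommSemiring R] (x : V → R) (i : V) {j : V}
    {S : Finset V} (hj : j ∈ S) : ∏ k ∈ S, transferWeight x i j k = 0 :=
  prod_eq_zero hj (Function.update_self ..)

theorem mul_prod_transferWeight_of_target_mem [CommSemiring R] (x : V → R) {i j : V} {S : Finset V}
    (hi : i ∈ S) (hj : j ∉ S) :
    x i * ∏ k ∈ S, transferWeight x i j k = (x i + x j) * ∏ k ∈ S, x k := by
  rw [transferWeight, prod_update_of_notMem hj, prod_update_of_mem hi,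
    prod_eq_mul_prod_sdiff_singleton_of_mem hi x, mul_left_comm]

end TransferWeight

section CliqueSum

variable {V R : Type*} [Fintype V] [DecidableEq V] (G : SimpleGraph V) [DecidableRel G.Adj]

/-- The clique polynomial `f_s(G, x)` of a graph on an arbitrary finite vertex type, with values in
an arbitrary commutative semiring. -/
def cliqueSum [CommSemiring R] (s : ℕ) (x : V → R) : R :=
  ∑ S ∈ G.cliqueFinset s, ∏ i ∈ S, x i

variable {G}

theorem cliqueSum_eq_esymm_of_isClique [CommSemiring R] {K : Finset V} (hK : G.IsClique K)
    {x : V → R} (hx : ∀ i ∉ K, x i = 0) (s : ℕ) : cliqueSum G s x = (K.val.map x).esymm s := by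
  rw [esymm_map_val]
  refine (sum_subset (fun S hS ↦ ?_) fun S hS hSK ↦ ?_).symm
  · obtain ⟨hSK, hcard⟩ := mem_powersetCard.1 hS
    exact SimpleGraph.mem_cliqueFinset_iff.2 ⟨hK.subset (coe_subset.2 hSK), hcard⟩
  · have hcard := (SimpleGraph.mem_cliqueFinset_iff.1 hS).card_eq
    obtain ⟨i, hiS, hiK⟩ := not_subset.1 fun h ↦ hSK (mem_powersetCard.2 ⟨h, hcard⟩)
    exact prod_eq_zero hiS (hx i hiK)

/-- `x` is the mean of the two transfers with weights `x i` and `x j`, and the clique polynomial is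
affine on the segment joining them. -/
theorem add_mul_cliqueSum_of_not_adj [CommSemiring R] {i j : V} (hij : i ≠ j) (hadj : ¬ G.Adj i j)
    (s : ℕ) (x : V → R) :
    (x i + x j) * cliqueSum G s x
      = x i * cliqueSum G s (transferWeight x i j)
        + x j * cliqueSum G s (transferWeight x j i) := by
  simp only [cliqueSum, mul_sum, ← sum_add_distrib]
  refine sum_congr rfl fun S hS ↦ ?_
  have hS : G.IsClique S := (SimpleGraph.mem_cliqueFinset_iff.1 hS).isClique
  by_cases hi : i ∈ S <;> by_cases hj : j ∈ S
  · exact absurd (hS hi hj hij) hadj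
  · rw [mul_prod_transferWeight_of_target_mem x hi hj, prod_transferWeight_of_source_mem x j hi,
      mul_zero, add_zero]
  · rw [mul_prod_transferWeight_of_target_mem x hj hi, prod_transferWeight_of_source_mem x i hj,
      mul_zero, zero_add, add_comm (x i)]
  · rw [prod_transferWeight_of_notMem x hi hj, prod_transferWeight_of_notMem x hj hi, add_mul]

theorem cliqueSum_le_transferWeight_or [CommSemiring R] [LinearOrder R] [IsStrictOrderedRing R]
    {i j : V} (hij : i ≠ j) (hadj : ¬ G.Adj i j) (s : ℕ) {x : V → R} (hx : 0 ≤ x) :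
    cliqueSum G s x ≤ cliqueSum G s (transferWeight x i j)
      ∨ cliqueSum G s x ≤ cliqueSum G s (transferWeight x j i) := by
  rcases (hx i).eq_or_lt with hi | hi
  · exact .inr (by rw [transferWeight_of_eq_zero hi.symm])
  · by_contra! ⟨hlt_ij, hlt_ji⟩
    refine (add_mul_cliqueSum_of_not_adj hij hadj s x).not_gt ?_
    rw [add_mul]
    exact add_lt_add_of_lt_of_le (mul_lt_mul_of_pos_left hlt_ij hi)
      (mul_le_mul_of_nonneg_left hlt_ji.le (hx j))

variable {𝕜 : Type*} [Field 𝕜] [LinearOrder 𝕜] [IsStrictOrderedRing 𝕜]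

theorem cliqueSum_le_of_isClique {K : Finset V} (hK : G.IsClique K) {r : ℕ} (hr : #K ≤ r)
    (s : ℕ) {x : V → 𝕜} (hx : 0 ≤ x) (hxK : ∀ i ∉ K, x i = 0) :
    cliqueSum G s x ≤ r.choose s * ((∑ i, x i) / r) ^ s := by
  have hsum : (K.val.map x).sum = ∑ i, x i :=
    sum_subset (subset_univ K) fun i _ hi ↦ hxK i hi
  rw [cliqueSum_eq_esymm_of_isClique hK hxK, ← hsum]
  refine esymm_le_choose_mul_mean_pow (fun a ha ↦ ?_) (by simpa using hr) s
  obtain ⟨i, -, rfl⟩ := Multiset.mem_map.1 ha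
  exact hx i

theorem cliqueSum_le_of_eq_zero_of_notMem {r : ℕ} (hG : G.CliqueFree (r + 1)) (s : ℕ)
    (K : Finset V) {x : V → 𝕜} (hx : 0 ≤ x) (hxK : ∀ i ∉ K, x i = 0) :
    cliqueSum G s x ≤ r.choose s * ((∑ i, x i) / r) ^ s := by
  induction K using Finset.strongInduction generalizing x with
  | H K ih =>
  by_cases hK : G.IsClique K
  · have hr : #K ≤ r := by
      by_contra! hlt
      exact hG.mono hlt K ⟨hK, rfl⟩
    exact cliqueSum_le_of_isClique hK hr s hx hxK
  · have bound_of_transfer : ∀ i ∈ K, ∀ j ∈ K, i ≠ j →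
        cliqueSum G s (transferWeight x i j) ≤ r.choose s * ((∑ k, x k) / r) ^ s := by
      intro i hi j hj hij
      rw [← sum_transferWeight x hij]
      exact ih _ (erase_ssubset hj) (transferWeight_nonneg hx i j)
        (transferWeight_eq_zero_of_notMem_erase hxK hi)
    obtain ⟨i, hi, j, hj, hij, hadj⟩ : ∃ i ∈ K, ∃ j ∈ K, i ≠ j ∧ ¬ G.Adj i j := by
      simpa [SimpleGraph.IsClique, Set.Pairwise] using hK
    rcases cliqueSum_le_transferWeight_or hij hadj s hx with hle | hle
    · exact hle.trans (bound_of_transfer i hi j hj hij)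
    · exact hle.trans (bound_of_transfer j hj i hi hij.symm)

theorem fClique_upper_bound_general {r : ℕ} (hG : G.CliqueFree (r + 1)) (s : ℕ)
    {x : V → 𝕜} (hx : 0 ≤ x) :
    cliqueSum G s x ≤ r.choose s * ((∑ i, x i) / r) ^ s :=
  cliqueSum_le_of_eq_zero_of_notMem hG s univ hx fun i hi ↦ absurd (mem_univ i) hi

end CliqueSum

/-- For a graph `G` with clique number `ω`, `1 ≤ s ≤ ω`, and `x ≥ 0`,
`f_s(G,x) ≤ C(ω,s)·((x_1 + ⋯ + x_n)/ω)^s`. -/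
theorem fClique_upper_bound {n : ℕ} (G : SimpleGraph (Fin n)) [DecidableRel G.Adj]
    (s : ℕ) (hs : 1 ≤ s) (hsw : s ≤ G.cliqueNum)
    (x : Fin n → ℝ) (hx : ∀ i, 0 ≤ x i) :
    fClique G s x
      ≤ (G.cliqueNum.choose s : ℝ) * ((∑ i, x i) / (G.cliqueNum : ℝ)) ^ s :=
  have hG : G.CliqueFree (G.cliqueNum + 1) := fun _ hK ↦
    (hK.isClique.card_le_cliqueNum.trans_lt (Nat.lt_succ_self _)).ne hK.card_eq
  fClique_upper_bound_general hG s hx
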